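/- Let X be a simplicial tree equipped with the combinatorial path metric and let S be a finite nonempty set of automorphisms of X with λ(S, X) > 0 (i.e. S has no global fixed point). Then S^{≤2} = S ∪ S·S contains a loxodromic element b with the following property: there is a universal constant c₀ > 0 such that for every o ∈ X with λ(S, o) = λ(S, X) one has d(o, b·o) ≥ λ(S, X) − 10, and the bi-infinite concatenation α = ⋃_{n∈ℤ} bⁿ[o, b·o] of translates of the geodesic [o, b·o] is a c₀-quasi-geodesic (hence a quasi-axis for b). -/

import Mathlib

open Pointwise

/-- A geodesic from `a` to `b`, parametrized by arc length on `[0, dist a b]`. -/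
def IsGeodesicSeg {X : Type*} [MetricSpace X] (γ : ℝ → X) (a b : X) : Prop :=
  γ 0 = a ∧ γ (dist a b) = b ∧
    ∀ s ∈ Set.Icc (0 : ℝ) (dist a b), ∀ t ∈ Set.Icc (0 : ℝ) (dist a b),
      dist (γ s) (γ t) = |s - t|

/-- A geodesic metric space: any two points are joined by a geodesic segment. -/
def GeodesicMetricSpace (X : Type*) [MetricSpace X] : Prop :=
  ∀ a b : X, ∃ γ : ℝ → X, IsGeodesicSeg γ a b

/-- `δ`-hyperbolicity via thin triangles: every side of a geodesic triangle is in the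
`δ`-neighbourhood of the union of the other two sides. -/
def DeltaHyperbolic (X : Type*) [MetricSpace X] (δ : ℝ) : Prop :=
  ∀ a b c : X, ∀ γ₁ γ₂ γ₃ : ℝ → X,
    IsGeodesicSeg γ₁ a b → IsGeodesicSeg γ₂ b c → IsGeodesicSeg γ₃ c a →
    ∀ t ∈ Set.Icc (0 : ℝ) (dist a b),
      (∃ u ∈ Set.Icc (0 : ℝ) (dist b c), dist (γ₁ t) (γ₂ u) ≤ δ) ∨
      (∃ u ∈ Set.Icc (0 : ℝ) (dist c a), dist (γ₁ t) (γ₃ u) ≤ δ)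

/-- Displacement `λ(S,x) = max_{s ∈ S} d(x, s·x)` of a finite set of isometries at `x`. -/
noncomputable def idispAt {X : Type*} [MetricSpace X] (S : Finset (X ≃ᵢ X)) (x : X) : ℝ :=
  sSup ((fun s : X ≃ᵢ X => dist x (s x)) '' (S : Set (X ≃ᵢ X)))

/-- Displacement `λ(S,X) = inf_{x ∈ X} λ(S,x)` of a finite set of isometries on `X`. -/
noncomputable def idispSpace {X : Type*} [MetricSpace X] (S : Finset (X ≃ᵢ X)) : ℝ :=
  sInf (Set.range fun x : X => idispAt S x)

/-- An isometry is loxodromic if its stable translation length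
`τ(b) = lim_n d(x, bⁿ·x)/n` is strictly positive. -/
def Loxodromic {X : Type*} [MetricSpace X] (b : X ≃ᵢ X) : Prop :=
  ∃ (x : X) (τ : ℝ), 0 < τ ∧
    Filter.Tendsto (fun n : ℕ => dist x ((b ^ n) x) / n) Filter.atTop (nhds τ)

/-- The bi-infinite concatenation `α = ⋃_{n ∈ ℤ} bⁿ[o, b·o]` of the `b`-translates of a
geodesic `γ` from `o` to `b·o`, parametrized by arc length. -/
noncomputable def axisPath {X : Type*} [MetricSpace X] (b : X ≃ᵢ X) (o : X) (γ : ℝ → X)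
    (t : ℝ) : X :=
  (b ^ ⌊t / dist o (b o)⌋)
    (γ (t - (⌊t / dist o (b o)⌋ : ℝ) * dist o (b o)))

/-- A path `α : ℝ → X` parametrized by arc length is a `c`-quasi-geodesic: the length
`|s - t|` of any subpath is at most `c · d(α s, α t) + c`. -/
def IsQuasiGeodesicParam {X : Type*} [MetricSpace X] (c : ℝ) (α : ℝ → X) : Prop :=
  ∀ s t : ℝ, |s - t| ≤ c * dist (α s) (α t) + c ∧ dist (α s) (α t) ≤ |s - t|


/-- four point condition -/
def FourPt (X : Type*) [MetricSpace X] : Prop :=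
  ∀ x y z w : X, dist x y + dist z w ≤ max (dist x z + dist y w) (dist x w + dist y z)

lemma exists_pt {X : Type*} [MetricSpace X] (hG : GeodesicMetricSpace X) (a b : X) (r : ℝ)
    (h0 : 0 ≤ r) (h1 : r ≤ dist a b) : ∃ p, dist a p = r ∧ dist p b = dist a b - r := by
  obtain ⟨γ, g0, g1, g⟩ := hG a b
  refine ⟨γ r, ?_, ?_⟩
  · have := g 0 ⟨le_rfl, dist_nonneg⟩ r ⟨h0, h1⟩
    rw [g0] at this
    rw [this, zero_sub, abs_neg, abs_of_nonneg h0]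
  · have := g r ⟨h0, h1⟩ (dist a b) ⟨dist_nonneg, le_rfl⟩
    rw [g1] at this
    rw [this, abs_sub_comm, abs_of_nonneg (by linarith)]

lemma geod_dist {X : Type*} [MetricSpace X] {γ : ℝ → X} {a b : X} (h : IsGeodesicSeg γ a b)
    {t : ℝ} (ht : t ∈ Set.Icc (0 : ℝ) (dist a b)) :
    dist a (γ t) = t ∧ dist (γ t) b = dist a b - t := by
  obtain ⟨g0, g1, g⟩ := h
  constructor
  · have := g 0 ⟨le_rfl, dist_nonneg⟩ t ht
    rw [g0] at this
    rw [this, zero_sub, abs_neg, abs_of_nonneg ht.1]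
  · have := g t ht (dist a b) ⟨dist_nonneg, le_rfl⟩
    rw [g1] at this
    rw [this, abs_sub_comm, abs_of_nonneg (by linarith [ht.2])]

lemma thin_between {X : Type*} [MetricSpace X] (hG : GeodesicMetricSpace X)
    (hD : DeltaHyperbolic X 0) {a b : X} {γ : ℝ → X} (h : IsGeodesicSeg γ a b) (c : X)
    {t : ℝ} (ht : t ∈ Set.Icc (0 : ℝ) (dist a b)) :
    dist b (γ t) + dist (γ t) c = dist b c ∨ dist c (γ t) + dist (γ t) a = dist c a := by
  obtain ⟨γ₂, h2⟩ := hG b c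
  obtain ⟨γ₃, h3⟩ := hG c a
  rcases hD a b c γ γ₂ γ₃ h h2 h3 t ht with ⟨u, hu, e⟩ | ⟨u, hu, e⟩
  · left
    have e := dist_le_zero.1 e
    have := geod_dist h2 hu
    rw [e]; linarith
  · right
    have e := dist_le_zero.1 e
    have := geod_dist h3 hu
    rw [e]; linarith

lemma between_K {X : Type*} [MetricSpace X] (hG : GeodesicMetricSpace X)
    (hD : DeltaHyperbolic X 0) (a b m c : X) (hm : dist a m + dist m b = dist a b) :
    dist b m + dist m c = dist b c ∨ dist a m + dist m c = dist a c := by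
  obtain ⟨γ, h⟩ := hG a b
  have hr : dist a m ∈ Set.Icc (0 : ℝ) (dist a b) :=
    ⟨dist_nonneg, by linarith [dist_nonneg (x := m) (y := b)]⟩
  have hp := geod_dist h hr
  have e : γ (dist a m) = m := by
    obtain ⟨γ₂, h2⟩ := hG b m
    obtain ⟨γ₃, h3⟩ := hG m a
    rcases hD a b m γ γ₂ γ₃ h h2 h3 _ hr with ⟨u, hu, e⟩ | ⟨u, hu, e⟩
    · have e := dist_le_zero.1 e
      have := geod_dist h2 hu
      rw [← e] at this
      rw [dist_comm _ b] at hp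
      rw [dist_comm b m] at this
      exact dist_le_zero.1 (by linarith)
    · have e := dist_le_zero.1 e
      have := geod_dist h3 hu
      rw [← e] at this
      rw [dist_comm a (γ _)] at hp
      rw [dist_comm m a] at this
      rw [dist_comm m (γ _)] at this
      exact dist_le_zero.1 (by linarith)
  have := thin_between hG hD h c hr
  rw [e] at this
  rcases this with h | h
  · exact Or.inl h
  · right
    rw [dist_comm a m, dist_comm a c, dist_comm m c]; linarith

lemma exists_median {X : Type*} [MetricSpace X] (hG : GeodesicMetricSpace X)
    (hD : DeltaHyperbolic X 0) (a b c : X) :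
    ∃ m, dist a m + dist m b = dist a b ∧ dist b m + dist m c = dist b c ∧
      dist c m + dist m a = dist c a := by
  obtain ⟨γ, h⟩ := hG a b
  have hc : ContinuousOn γ (Set.Icc (0 : ℝ) (dist a b)) := by
    have : LipschitzOnWith 1 γ (Set.Icc (0 : ℝ) (dist a b)) := by
      apply LipschitzOnWith.of_dist_le_mul
      intro x hx y hy
      rw [h.2.2 x hx y hy, Real.dist_eq]; simp
    exact this.continuousOn
  obtain ⟨t, ht, h1, h2⟩ : ∃ t ∈ Set.Icc (0 : ℝ) (dist a b),
      dist b (γ t) + dist (γ t) c - dist b c = 0 ∧ dist c (γ t) + dist (γ t) a - dist c a = 0 := by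
    have hpre : IsPreconnected (Set.Icc (0 : ℝ) (dist a b)) := isPreconnected_Icc
    have c1 : ContinuousOn (fun t => dist b (γ t) + dist (γ t) c - dist b c)
        (Set.Icc (0 : ℝ) (dist a b)) := by fun_prop
    have c2 : ContinuousOn (fun t => dist c (γ t) + dist (γ t) a - dist c a)
        (Set.Icc (0 : ℝ) (dist a b)) := by fun_prop
    have k1 := c1.preimage_isClosed_of_isClosed isClosed_Icc (isClosed_singleton (x := (0 : ℝ)))
    have k2 := c2.preimage_isClosed_of_isClosed isClosed_Icc (isClosed_singleton (x := (0 : ℝ)))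
    obtain ⟨t, ht, ht1, ht2⟩ := isPreconnected_closed_iff.1 hpre _ _ k1 k2 (by
      intro t ht
      rcases thin_between hG hD h c ht with e | e
      · left; exact ⟨ht, by simp; linarith⟩
      · right; exact ⟨ht, by simp; linarith⟩)
      ⟨dist a b, ⟨dist_nonneg, le_rfl⟩, ⟨dist_nonneg, le_rfl⟩, by simp [h.2.1]⟩
      ⟨0, ⟨le_rfl, dist_nonneg⟩, ⟨le_rfl, dist_nonneg⟩, by simp [h.1]⟩
    exact ⟨t, ht, ht1.2, ht2.2⟩
  have := geod_dist h ht
  exact ⟨γ t, by linarith, by linarith, by linarith⟩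

lemma fourPt {X : Type*} [MetricSpace X] (hG : GeodesicMetricSpace X)
    (hD : DeltaHyperbolic X 0) : FourPt X := by
  intro x y z w
  obtain ⟨m, h1, h2, h3⟩ := exists_median hG hD x y z
  have k1 := between_K hG hD x y m w h1
  have k2 := between_K hG hD y z m w h2
  have k3 := between_K hG hD z x m w h3
  have t1 := dist_triangle x m w
  have t2 := dist_triangle y m w
  have t3 := dist_triangle z m w
  have e1 := dist_comm x m
  have e2 := dist_comm y m
  have e3 := dist_comm z m
  have e4 := dist_comm x z
  rw [le_max_iff]
  by_contra! hcon
  obtain ⟨n1, n2⟩ := hcon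
  rcases k1 with k1 | k1 <;> rcases k2 with k2 | k2 <;> rcases k3 with k3 | k3 <;> linarith

section Tree
variable {X : Type*} [MetricSpace X]

lemma FourPt.glue (H : FourPt X) {a b c d : X} (h1 : dist a c = dist a b + dist b c)
    (h2 : dist b d = dist b c + dist c d) (h : 0 < dist b c) :
    dist a d = dist a b + dist b c + dist c d := by
  have := H a c b d
  have t1 := dist_triangle a b d
  have e := dist_comm c b
  rcases le_max_iff.1 this with k | k <;> linarith

lemma FourPt.uniq (H : FourPt X) {a b m n : X} (h1 : dist a m + dist m b = dist a b)
    (h2 : dist a n + dist n b = dist a b) (h : dist a m = dist a n) : m = n := by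
  have := H a b m n
  rw [dist_comm b n, dist_comm b m] at this
  apply dist_le_zero.1
  rcases le_max_iff.1 this with k | k <;> linarith

lemma FourPt.growth (H : FourPt X) (s : X ≃ᵢ X) (y : X) (h : dist y (s y) < dist y (s (s y)))
    (n : ℕ) : dist y ((s ^ (n + 1)) y) =
      dist y (s y) + n * (dist y (s (s y)) - dist y (s y)) := by
  have key : ∀ n : ℕ, dist y ((s ^ (n + 1)) y) =
      dist y (s y) + n * (dist y (s (s y)) - dist y (s y)) ∧
      dist y ((s ^ (n + 2)) y) =
      dist y (s y) + (n + 1 : ℕ) * (dist y (s (s y)) - dist y (s y)) := by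
    intro n
    induction n with
    | zero => simp [pow_succ, IsometryEquiv.mul_apply]
    | succ n ih =>
      obtain ⟨i1, i2⟩ := ih
      refine ⟨i2, ?_⟩
      have e1 : (s ^ (n + 1 + 2)) y = s ((s ^ (n + 2)) y) := by
        rw [pow_succ' s (n + 2)]; rfl
      have e2 : (s ^ (n + 2)) y = s ((s ^ (n + 1)) y) := by
        rw [pow_succ' s (n + 1)]; rfl
      have e3 : (s ^ (n + 2)) (s y) = s ((s ^ (n + 2)) y) := by
        rw [← e1, pow_succ s (n + 2)]; rfl
      have d1 : dist (s y) (s ((s ^ (n + 2)) y)) = dist y ((s ^ (n + 2)) y) := s.dist_eq _ _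
      have d2 : dist (s y) ((s ^ (n + 2)) y) = dist y ((s ^ (n + 1)) y) := by
        rw [e2]; exact s.dist_eq _ _
      have d3 : dist ((s ^ (n + 2)) y) (s ((s ^ (n + 2)) y)) = dist y (s y) := by
        rw [← e3]; exact (s ^ (n + 2)).dist_eq _ _
      have f1 := H y ((s ^ (n + 2)) y) (s y) (s ((s ^ (n + 2)) y))
      have f2 := H y (s ((s ^ (n + 2)) y)) (s y) ((s ^ (n + 2)) y)
      rw [dist_comm ((s ^ (n + 2)) y) (s y)] at f1
      rw [dist_comm (s ((s ^ (n + 2)) y)) ((s ^ (n + 2)) y),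
        dist_comm (s ((s ^ (n + 2)) y)) (s y)] at f2
      rw [d1, d2, d3, i1, i2] at f1 f2
      rw [e1]
      have hn : (0 : ℝ) ≤ n := Nat.cast_nonneg n
      have hp : 0 ≤ (n : ℝ) * (dist y (s (s y)) - dist y (s y)) :=
        mul_nonneg hn (by linarith)
      push_cast at f1 f2 ⊢
      ring_nf at f1 f2 hp ⊢
      rcases le_max_iff.1 f1 with k | k <;> rcases le_max_iff.1 f2 with l | l <;> linarith
  exact (key n).1

lemma FourPt.lox (H : FourPt X) (s : X ≃ᵢ X) (y : X) (h : dist y (s y) < dist y (s (s y))) :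
    Loxodromic s := by
  refine ⟨y, dist y (s (s y)) - dist y (s y), by linarith, ?_⟩
  rw [← Filter.tendsto_add_atTop_iff_nat 1]
  set τ := dist y (s (s y)) - dist y (s y)
  have e : (fun n : ℕ => dist y ((s ^ (n + 1)) y) / ((n + 1 : ℕ) : ℝ)) =
      fun n : ℕ => τ + (dist y (s y) - τ) * (1 / ((n : ℝ) + 1)) := by
    ext n
    rw [H.growth s y h n]
    have : (n : ℝ) + 1 ≠ 0 := by positivity
    push_cast
    field_simp
    ring
  rw [e]
  have := (tendsto_one_div_add_atTop_nhds_zero_nat (𝕜 := ℝ)).const_mul (dist y (s y) - τ)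
  simpa using this.const_add τ

lemma FourPt.mid (H : FourPt X) (s : X ≃ᵢ X) (y m : X) (h : dist y (s (s y)) ≤ dist y (s y))
    (h1 : dist y m = dist y (s y) / 2) (h2 : dist m (s y) = dist y (s y) / 2) : s m = m := by
  have a1 : dist (s y) (s m) = dist y m := s.dist_eq _ _
  have a2 : dist (s m) (s (s y)) = dist m (s y) := s.dist_eq _ _
  have a3 : dist (s y) (s (s y)) = dist y (s y) := s.dist_eq _ _
  have f1 := H y (s y) m (s (s y))
  have f2 := H (s y) (s (s y)) m (s m)
  rw [dist_comm (s y) m] at f1 f2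
  rw [dist_comm (s (s y)) (s m), dist_comm (s (s y)) m] at f2
  symm
  apply dist_le_zero.1
  rcases le_max_iff.1 f1 with k | k <;> rcases le_max_iff.1 f2 with l | l <;> linarith

lemma FourPt.serre (H : FourPt X) (hG : GeodesicMetricSpace X) (S : Finset (X ≃ᵢ X))
    (hS : S.Nonempty) (x : X)
    (h1 : ∀ s ∈ S, ∀ y, dist y (s (s y)) ≤ dist y (s y))
    (h2 : ∀ s ∈ S, ∀ t ∈ S, ∀ y, dist y ((s * t) ((s * t) y)) ≤ dist y ((s * t) y)) :
    ∃ p, ∀ t ∈ S, t p = p := by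
  have mids : ∀ a b : X, ∃ m, dist a m = dist a b / 2 ∧ dist m b = dist a b / 2 := by
    intro a b
    obtain ⟨m, k1, k2⟩ := exists_pt hG a b (dist a b / 2) (by positivity)
      (by linarith [dist_nonneg (x := a) (y := b)])
    exact ⟨m, k1, by linarith⟩
  obtain ⟨s, hs, hmax⟩ := S.exists_max_image (fun s => dist x (s x)) hS
  obtain ⟨p, p1, p2⟩ := mids x (s x)
  refine ⟨p, fun t ht => ?_⟩
  obtain ⟨y, y1, y2⟩ := mids x ((s * t) x)
  have hy : s (t y) = y := H.mid (s * t) x y (h2 s hs t ht x) y1 y2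
  obtain ⟨q, q1, q2⟩ := mids y (t y)
  have hqt : t q = q := H.mid t y q (h1 t ht y) q1 q2
  have hty : s.symm y = t y := by
    conv_lhs => rw [← hy]
    simp
  have hqs : s q = q := by
    have : s.symm q = q := by
      apply H.mid s.symm y q
      · have a := h1 s hs (s.symm (s.symm y))
        simp only [IsometryEquiv.apply_symm_apply] at a
        have b : dist (s (s.symm (s.symm y))) (s (s.symm y)) =
          dist (s.symm (s.symm y)) (s.symm y) := s.dist_eq _ _
        simp only [IsometryEquiv.apply_symm_apply] at b
        rw [dist_comm y, dist_comm y (s.symm y), b]; exact a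
      · rw [hty]; exact q1
      · rw [hty]; exact q2
    conv_lhs => rw [← this]
    simp
  obtain ⟨r, r1, r2⟩ := mids x (t x)
  have hrt : t r = r := H.mid t x r (h1 t ht x) r1 r2
  have hm := hmax t ht
  have dq : dist (s x) q = dist x q := by
    conv_lhs => rw [← hqs]
    exact s.dist_eq _ _
  have dq' : dist (t x) q = dist x q := by
    conv_lhs => rw [← hqt]
    exact t.dist_eq _ _
  have bp : dist x p + dist p q = dist x q := by
    have := H x (s x) p q
    rw [dist_comm (s x) p] at this
    have := dist_triangle x p q
    rcases le_max_iff.1 ‹_ ≤ max _ _› with k | k <;> linarith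
  have br : dist x r + dist r q = dist x q := by
    have := H x (t x) r q
    rw [dist_comm (t x) r] at this
    have := dist_triangle x r q
    rcases le_max_iff.1 ‹_ ≤ max _ _› with k | k <;> linarith
  have brp : dist r p + dist p q = dist r q := by
    have := H x q r p
    have t1 := dist_triangle r p q
    rw [dist_comm q p, dist_comm q r] at this
    rcases le_max_iff.1 ‹_ ≤ max _ _› with k | k <;> linarith
  have e1 : dist r (t p) = dist r p := by
    conv_lhs => rw [← hrt]
    exact t.dist_eq _ _
  have e2 : dist (t p) q = dist p q := by
    conv_lhs => rw [← hqt]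
    exact t.dist_eq _ _
  exact H.uniq (a := r) (b := q) (by rw [e1, e2, brp]) brp e1

lemma FourPt.zpow_dist (H : FourPt X) (b : X ≃ᵢ X) (o : X) (h0 : 0 < dist o (b o))
    (h : dist o (b (b o)) = 2 * dist o (b o)) (m n : ℤ) (hmn : m ≤ n) :
    dist ((b ^ m) o) ((b ^ n) o) = (n - m) * dist o (b o) := by
  obtain ⟨k, rfl⟩ := Int.le.dest hmn
  rw [zpow_add, IsometryEquiv.mul_apply, (b ^ m).dist_eq, zpow_natCast]
  rcases k with _ | k
  · simp
  · rw [H.growth b o (by linarith) k, h]; push_cast; ring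

lemma FourPt.axis (H : FourPt X) (b : X ≃ᵢ X) (o : X) (h0 : 0 < dist o (b o))
    (h : dist o (b (b o)) = 2 * dist o (b o)) (γ : ℝ → X) (hγ : IsGeodesicSeg γ o (b o)) :
    IsQuasiGeodesicParam 1 (axisPath b o γ) := by
  have main : ∀ s t : ℝ, s ≤ t → dist (axisPath b o γ s) (axisPath b o γ t) = t - s := by
    intro s t hst
    unfold axisPath
    set l := dist o (b o) with hl
    have hu : ∀ s : ℝ, s - (⌊s / l⌋ : ℝ) * l ∈ Set.Icc (0 : ℝ) l := by
      intro s
      have a1 := Int.floor_le (s / l)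
      have a2 := Int.lt_floor_add_one (s / l)
      rw [le_div_iff₀ h0] at a1
      rw [div_lt_iff₀ h0] at a2
      constructor <;> nlinarith
    have hmn : ⌊s / l⌋ ≤ ⌊t / l⌋ := Int.floor_le_floor (by gcongr)
    have us := hu s
    have ut := hu t
    generalize ⌊s / l⌋ = m at *
    generalize ⌊t / l⌋ = n at *
    rcases hmn.eq_or_lt with e | e
    · subst e
      rw [(b ^ m).dist_eq, hγ.2.2 _ us _ ut, abs_sub_comm, abs_of_nonneg (by linarith)]
      ring
    · have gs := geod_dist hγ us
      have gt := geod_dist hγ ut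
      have z1 := H.zpow_dist b o h0 h (m + 1) n e
      have z2 := H.zpow_dist b o h0 h m (n + 1) (by omega)
      have sh : ∀ k : ℤ, (b ^ (k + 1)) o = (b ^ k) (b o) := by
        intro k; rw [zpow_add_one]; rfl
      rw [sh] at z1 z2
      set P := γ (s - m * l)
      set Q := γ (t - n * l)
      have d1 : dist ((b ^ m) o) ((b ^ m) P) = dist o P := (b ^ m).dist_eq _ _
      have d2 : dist ((b ^ m) P) ((b ^ m) (b o)) = dist P (b o) := (b ^ m).dist_eq _ _
      have d3 : dist ((b ^ n) o) ((b ^ n) Q) = dist o Q := (b ^ n).dist_eq _ _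
      have d4 : dist ((b ^ n) Q) ((b ^ n) (b o)) = dist Q (b o) := (b ^ n).dist_eq _ _
      have t1 := dist_triangle4 ((b ^ m) P) ((b ^ m) (b o)) ((b ^ n) o) ((b ^ n) Q)
      have t2 := dist_triangle4 ((b ^ m) o) ((b ^ m) P) ((b ^ n) Q) ((b ^ n) (b o))
      rw [d2, z1, d3, gs.2, gt.1] at t1
      rw [d1, z2, d4, gs.1, gt.2] at t2
      push_cast at t1 t2
      apply le_antisymm <;> nlinarith
  intro s t
  rcases le_total s t with h | h
  · rw [main s t h, abs_sub_comm, abs_of_nonneg (by linarith)]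
    constructor <;> linarith
  · rw [dist_comm, main t s h, abs_of_nonneg (by linarith)]
    constructor <;> linarith

lemma pow_dist_le (s : X ≃ᵢ X) (x : X) (n : ℕ) : dist x ((s ^ n) x) ≤ n * dist x (s x) := by
  induction n with
  | zero => simp
  | succ n ih =>
    have e : (s ^ (n + 1)) x = (s ^ n) (s x) := by rw [pow_succ]; rfl
    have t := dist_triangle x ((s ^ n) x) ((s ^ n) (s x))
    rw [(s ^ n).dist_eq] at t
    rw [e]; push_cast; linarith

lemma FourPt.axis_min (H : FourPt X) (s : X ≃ᵢ X) (o x : X) (h0 : 0 < dist o (s o))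
    (h : dist o (s (s o)) = 2 * dist o (s o)) : dist o (s o) ≤ dist x (s x) := by
  by_contra! hlt
  obtain ⟨n, hn⟩ := exists_nat_gt (2 * dist o x / (dist o (s o) - dist x (s x)))
  rw [div_lt_iff₀ (by linarith)] at hn
  have z := H.zpow_dist s o h0 h 0 n (by positivity)
  rw [zpow_natCast] at z
  simp only [zpow_zero, IsometryEquiv.coe_one, id, Int.cast_zero, Int.cast_natCast, sub_zero] at z
  have t := dist_triangle4 o x ((s ^ n) x) ((s ^ n) o)
  have p := pow_dist_le s x n
  rw [(s ^ n).dist_eq, dist_comm x o, z] at t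
  nlinarith

lemma FourPt.min_axis (H : FourPt X) (hG : GeodesicMetricSpace X) (s : X ≃ᵢ X) (o : X)
    (h0 : 0 < dist o (s o)) (h : ∀ x, dist o (s o) ≤ dist x (s x)) :
    dist o (s (s o)) = 2 * dist o (s o) := by
  obtain ⟨m, k1, k2⟩ := exists_pt hG o (s o) (dist o (s o) / 2) (by positivity) (by linarith)
  have a1 : dist (s o) (s m) = dist o m := s.dist_eq _ _
  have a2 : dist (s m) (s (s o)) = dist m (s o) := s.dist_eq _ _
  have a3 : dist (s o) (s (s o)) = dist o (s o) := s.dist_eq _ _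
  have hm := h m
  have tm := dist_triangle m (s o) (s m)
  have g1 := H.glue (a := o) (b := m) (c := s o) (d := s m) (by linarith) (by linarith)
    (by linarith)
  have g2 := H.glue (a := o) (b := s o) (c := s m) (d := s (s o)) (by linarith) (by linarith)
    (by linarith)
  linarith

lemma symm_dist (s : X ≃ᵢ X) (x y : X) : dist (s.symm x) y = dist x (s y) := by
  have := s.dist_eq (s.symm x) y
  rw [IsometryEquiv.apply_symm_apply] at this
  exact this.symm

lemma FourPt.unique_aux (H : FourPt X) (s : X ≃ᵢ X) (o o' : X) (L : ℝ) (hL : 0 < L)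
    (hs : dist o (s o) = L) (hs2 : dist o (s (s o)) < 2 * L)
    (h : L + dist o o' ≤ dist (s o) o') (hd : 0 < dist o o') : L < dist o' (s o') := by
  have f := H (s o) o' o (s.symm o)
  rw [dist_comm o (s.symm o), symm_dist, dist_comm o' (s.symm o), symm_dist,
    dist_comm (s o) (s.symm o), symm_dist, dist_comm (s o) o, dist_comm o' o] at f
  have e : dist (s o) (s o') = dist o o' := s.dist_eq _ _
  have t1 := dist_triangle o (s o) (s o')
  have t2 := dist_triangle (s o) o o'
  rw [dist_comm (s o) o] at t2
  have k : L + dist o o' ≤ dist o (s o') := by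
    rcases le_max_iff.1 f with k | k <;> linarith
  have g := H.glue (a := o') (b := o) (c := s o) (d := s o')
    (by rw [dist_comm o' (s o), dist_comm o' o]; linarith) (by linarith) (by linarith)
  rw [dist_comm o' o] at g
  linarith

lemma FourPt.decrease (H : FourPt X) (t : X ≃ᵢ X) (o x z : X) (L δ : ℝ)
    (hδ : 0 < δ) (hδL : δ < L) (hz : dist o z = L) (ht : dist o (t o) = L)
    (h1 : 2 * δ ≤ 2 * L - dist z (t o)) (h2 : 2 * δ ≤ 2 * L - dist o (t (t o)))
    (hx1 : dist o x = δ) (hx2 : dist x z = L - δ) : dist x (t x) < L := by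
  have f1 := H x (t o) o z
  rw [dist_comm x o, dist_comm (t o) o, dist_comm (t o) z] at f1
  have k1 : dist x (t o) ≤ L - δ := by
    rcases le_max_iff.1 f1 with k | k <;> linarith
  have f2 := H (t.symm o) x o (t o)
  rw [symm_dist, symm_dist, symm_dist, dist_comm x o] at f2
  have k2 : dist o (t x) ≤ L - δ := by
    rcases le_max_iff.1 f2 with k | k <;> linarith
  have f3 := H x (t x) o (t o)
  have e : dist (t x) (t o) = dist x o := t.dist_eq _ _
  rw [e, dist_comm x o, dist_comm (t x) o] at f3
  rcases le_max_iff.1 f3 with k | k <;> linarith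

lemma disp_le (S : Finset (X ≃ᵢ X)) (x : X) (s : X ≃ᵢ X) (hs : s ∈ S) :
    dist x (s x) ≤ idispAt S x :=
  le_csSup (S.finite_toSet.image _).bddAbove ⟨s, hs, rfl⟩

lemma disp_mem (S : Finset (X ≃ᵢ X)) (hS : S.Nonempty) (x : X) :
    ∃ s ∈ S, idispAt S x = dist x (s x) := by
  have : idispAt S x ∈ ((fun s : X ≃ᵢ X => dist x (s x)) '' (S : Set (X ≃ᵢ X))) :=
    Set.Nonempty.csSup_mem (Set.Nonempty.image _ hS) (S.finite_toSet.image _)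
  obtain ⟨s, hs, e⟩ := this
  exact ⟨s, hs, e.symm⟩

lemma space_le (S : Finset (X ≃ᵢ X)) (hS : S.Nonempty) (x : X) : idispSpace S ≤ idispAt S x := by
  refine csInf_le ⟨0, ?_⟩ ⟨x, rfl⟩
  rintro _ ⟨y, rfl⟩
  obtain ⟨s, -, e⟩ := disp_mem S hS y
  simp only [e]; exact dist_nonneg

lemma FourPt.pair (H : FourPt X) (hG : GeodesicMetricSpace X) (S : Finset (X ≃ᵢ X))
    (hS : S.Nonempty) (L : ℝ) (hL : 0 < L) (o : X) (ho : ∀ s ∈ S, dist o (s o) ≤ L)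
    (hmin : ∀ x, ∃ s ∈ S, L ≤ dist x (s x))
    (hno : ∀ s ∈ S, dist o (s o) = L → dist o (s (s o)) < 2 * L) :
    ∃ s ∈ S, ∃ t ∈ S, dist o (s o) = L ∧ dist o (t o) = L ∧ 2 * L ≤ dist (s o) (t o) := by
  by_contra! hcon
  obtain ⟨s, hs, hsL⟩ := hmin o
  have hsL : dist o (s o) = L := le_antisymm (ho s hs) hsL
  have ev : ∀ᶠ δ in nhdsWithin (0 : ℝ) (Set.Ioi 0), ∀ t ∈ S, ∀ x, dist o x = δ →
      dist x (s o) = L - δ → dist x (t x) < L := by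
    rw [Filter.eventually_all_finset]
    intro t ht
    have hlt : ∀ ε : ℝ, 0 < ε → ∀ᶠ δ in nhdsWithin (0 : ℝ) (Set.Ioi 0), δ < ε := fun ε hε =>
      mem_nhdsWithin_of_mem_nhds (Iio_mem_nhds hε)
    rcases (ho t ht).eq_or_lt with e | e
    · have c1 := hcon s hs t ht hsL e
      have c2 := hno t ht e
      filter_upwards [self_mem_nhdsWithin, hlt L hL, hlt ((2 * L - dist (s o) (t o)) / 2)
        (by linarith), hlt ((2 * L - dist o (t (t o))) / 2) (by linarith)] with δ a1 a2 a3 a4 x x1 x2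
      exact H.decrease t o x (s o) L δ a1 a2 hsL e (by linarith) (by linarith) x1 x2
    · filter_upwards [hlt ((L - dist o (t o)) / 2) (by linarith)] with δ a1 x x1 x2
      have t4 := dist_triangle4 x o (t o) (t x)
      rw [t.dist_eq, dist_comm x o] at t4
      linarith
  have ev2 : ∀ᶠ δ in nhdsWithin (0 : ℝ) (Set.Ioi 0), δ < L :=
    mem_nhdsWithin_of_mem_nhds (Iio_mem_nhds hL)
  have ev3 : ∀ᶠ δ in nhdsWithin (0 : ℝ) (Set.Ioi 0), 0 < δ := self_mem_nhdsWithin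
  obtain ⟨δ, ⟨h1, h2⟩, h3⟩ := ((ev.and ev2).and ev3).exists
  obtain ⟨x, x1, x2⟩ := exists_pt hG o (s o) δ h3.le (by linarith)
  obtain ⟨t, ht, k⟩ := hmin x
  have := h1 t ht x x1 (by linarith)
  linarith

lemma FourPt.prod_axis (H : FourPt X) (s t : X ≃ᵢ X) (o : X) (L : ℝ) (hL : 0 < L)
    (hs : dist o (s o) = L) (ht : dist o (t o) = L) (hs2 : dist o (s (s o)) < 2 * L)
    (ht2 : dist o (t (t o)) < 2 * L) (hst : 2 * L ≤ dist (s o) (t o)) :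
    dist o (s (t o)) = 2 * L ∧ dist o (s (t (s (t o)))) = 4 * L := by
  have aux : ∀ s t : X ≃ᵢ X, dist o (s o) = L → dist o (t o) = L → dist o (s (s o)) < 2 * L →
      2 * L ≤ dist (s o) (t o) → dist o (s (t o)) = 2 * L := by
    intro s t hs ht hs2 hst
    have f := H (s o) (t o) o (s.symm o)
    rw [dist_comm o (s.symm o), symm_dist, dist_comm (t o) (s.symm o), symm_dist,
      dist_comm (s o) (s.symm o), symm_dist, dist_comm (s o) o, dist_comm (t o) o] at f
    have tr := dist_triangle o (s o) (s (t o))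
    rw [s.dist_eq] at tr
    rcases le_max_iff.1 f with k | k <;> linarith
  have a1 := aux s t hs ht hs2 hst
  have a2 := aux t s ht hs ht2 (by rw [dist_comm]; exact hst)
  have b1 : dist (s o) (s (t o)) = L := by rw [s.dist_eq, ht]
  have b2 : dist (s (t o)) (s (t (s o))) = L := by rw [s.dist_eq, t.dist_eq, hs]
  have b3 : dist (s (t (s o))) (s (t (s (t o)))) = L := by
    rw [s.dist_eq, t.dist_eq, s.dist_eq, ht]
  have c1 : dist (s o) (s (t (s o))) = 2 * L := by rw [s.dist_eq, a2]
  have c2 : dist (s (t o)) (s (t (s (t o)))) = 2 * L := by rw [s.dist_eq, t.dist_eq, a1]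
  have g1 := H.glue (a := o) (b := s o) (c := s (t o)) (d := s (t (s o)))
    (by linarith) (by linarith) (by linarith)
  have g2 := H.glue (a := o) (b := s (t o)) (c := s (t (s o))) (d := s (t (s (t o))))
    (by linarith) (by linarith) (by linarith)
  exact ⟨a1, by linarith⟩

end Tree

/-- Let `X` be a simplicial tree (formalized metrically: a `0`-hyperbolic
geodesic metric space, the combinatorial-metric realization of a simplicial tree) and let
`S` be a finite nonempty set of automorphisms (isometries) of `X` with `λ(S, X) > 0`,
i.e. without global fixed point. Then `S^{≤2} = S ∪ S·S` contains a loxodromic element `b`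
such that, for a universal constant `c₀ > 0`, for every `o ∈ X` with `λ(S,o) = λ(S,X)`
one has `d(o, b·o) ≥ λ(S,X) − 10` and the bi-infinite concatenation
`α = ⋃_{n∈ℤ} bⁿ[o, b·o]` of translates of the geodesic `[o, b·o]` is a
`c₀`-quasi-geodesic (a quasi-axis for `b`). -/
theorem statement7 :
    ∃ c₀ : ℝ, 0 < c₀ ∧
      ∀ (X : Type*) [MetricSpace X], GeodesicMetricSpace X → DeltaHyperbolic X 0 →
        ∀ S : Finset (X ≃ᵢ X), S.Nonempty → 0 < idispSpace S →
          ∃ b : X ≃ᵢ X, (b ∈ S ∨ ∃ s ∈ S, ∃ t ∈ S, b = s * t) ∧ Loxodromic b ∧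
            ∀ o : X, idispAt S o = idispSpace S →
              idispSpace S - 10 ≤ dist o (b o) ∧
              ∃ γ : ℝ → X, IsGeodesicSeg γ o (b o) ∧
                IsQuasiGeodesicParam c₀ (axisPath b o γ) := by
  refine ⟨1, one_pos, ?_⟩
  intro X _ hG hD S hS hL
  have H := fourPt hG hD
  by_cases hex : ∃ o : X, idispAt S o = idispSpace S
  · obtain ⟨o, ho⟩ := hex
    have hmin : ∀ x, ∃ s ∈ S, idispSpace S ≤ dist x (s x) := by
      intro x
      obtain ⟨s, hs, e⟩ := disp_mem S hS x
      exact ⟨s, hs, e ▸ space_le S hS x⟩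
    have hle : ∀ o, idispAt S o = idispSpace S → ∀ s ∈ S, dist o (s o) ≤ idispSpace S :=
      fun o ho s hs => ho ▸ disp_le S o s hs
    by_cases h1 : ∃ s ∈ S, ∀ x, idispSpace S ≤ dist x (s x)
    · obtain ⟨s, hs, hsx⟩ := h1
      have key : ∀ o, idispAt S o = idispSpace S → dist o (s o) = idispSpace S ∧
          dist o (s (s o)) = 2 * dist o (s o) := by
        intro o ho
        have e : dist o (s o) = idispSpace S := le_antisymm (hle o ho s hs) (hsx o)
        exact ⟨e, H.min_axis hG s o (by linarith) (fun x => e ▸ hsx x)⟩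
      refine ⟨s, Or.inl hs, H.lox s o (by have := key o ho; linarith), fun o' ho' => ?_⟩
      obtain ⟨k1, k2⟩ := key o' ho'
      obtain ⟨γ, hγ⟩ := hG o' (s o')
      exact ⟨by linarith, γ, hγ, H.axis s o' (by linarith) k2 γ hγ⟩
    · push Not at h1
      have hno : ∀ s ∈ S, dist o (s o) = idispSpace S → dist o (s (s o)) < 2 * idispSpace S := by
        intro s hs e
        obtain ⟨x, hx⟩ := h1 s hs
        have tr := dist_triangle o (s o) (s (s o))
        rw [s.dist_eq] at tr
        by_contra! hge
        have := H.axis_min s o x (by linarith) (by linarith)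
        linarith
      obtain ⟨s, hs, t, ht, es, et, hst⟩ := H.pair hG S hS _ hL o (hle o ho) hmin hno
      obtain ⟨k1, k2⟩ := H.prod_axis s t o _ hL es et (hno s hs es) (hno t ht et) hst
      have k1' : dist o ((s * t) o) = 2 * idispSpace S := k1
      have k2' : dist o ((s * t) ((s * t) o)) = 4 * idispSpace S := k2
      refine ⟨s * t, Or.inr ⟨s, hs, t, ht, rfl⟩, H.lox _ o (by linarith), fun o' ho' => ?_⟩
      have huniq : o' = o := by
        by_contra hne
        have hd : 0 < dist o o' := dist_pos.2 (Ne.symm hne)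
        have f := H (s o) (t o) o o'
        rw [dist_comm (s o) o, dist_comm (t o) o] at f
        rcases le_max_iff.1 f with k | k
        · have := H.unique_aux t o o' _ hL et (hno t ht et) (by linarith) hd
          linarith [hle o' ho' t ht]
        · have := H.unique_aux s o o' _ hL es (hno s hs es) (by linarith) hd
          linarith [hle o' ho' s hs]
      subst huniq
      obtain ⟨γ, hγ⟩ := hG o' ((s * t) o')
      exact ⟨by linarith, γ, hγ, H.axis _ o' (by linarith) (by linarith) γ hγ⟩
  · have hlox : ∃ b : X ≃ᵢ X, (b ∈ S ∨ ∃ s ∈ S, ∃ t ∈ S, b = s * t) ∧ Loxodromic b := by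
      by_contra! hcon
      have hX : Nonempty X := by
        by_contra hne
        rw [not_nonempty_iff] at hne
        unfold idispSpace at hL
        rw [Set.range_eq_empty, Real.sInf_empty] at hL
        exact lt_irrefl _ hL
      obtain ⟨x⟩ := hX
      obtain ⟨p, hp⟩ := H.serre hG S hS x
        (fun s hs y => by
          by_contra! hlt
          exact hcon s (Or.inl hs) (H.lox s y hlt))
        (fun s hs t ht y => by
          by_contra! hlt
          exact hcon (s * t) (Or.inr ⟨s, hs, t, ht, rfl⟩) (H.lox (s * t) y hlt))
      obtain ⟨s, hs, e⟩ := disp_mem S hS p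
      have := space_le S hS p
      rw [e, hp s hs, dist_self] at this
      linarith
    obtain ⟨b, hb, hl⟩ := hlox
    exact ⟨b, hb, hl, fun o ho => absurd ⟨o, ho⟩ hex⟩
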